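/- arXiv:1705.02247 — 2 statements merged into one kernel-verified Lean document; each statement's English description precedes it below -/
import Mathlib

section
/- Let P be a PMF on a finite set X, let M be a positive integer, let f : X → {1,…,M}, let L(x) = |{x' ∈ X : f(x') = f(x)}|, and let ρ > 0 with ρ̃ = 1/(1+ρ). Define the PMF Q on X by Q(x) = L(x)^{−(1+ρ)} / Σ_{x'} L(x')^{−(1+ρ)}, and let M' = |{f(x) : x ∈ X}| be the number of labels actually used. If X is distributed according to P, then E[L(X)^ρ] = 2^{ρ·[H_{ρ̃}(P) + Δ_{ρ̃}(P‖Q) − log₂ M']}. -/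
open Real

/-- `P` is a probability mass function on the finite type `X`. -/
def IsPMF {X : Type*} [Fintype X] (P : X → ℝ) : Prop :=
  (∀ x, 0 ≤ P x) ∧ ∑ x, P x = 1

/-- Rényi entropy of order `α` (base-2 logarithm). -/
noncomputable def renyiEntropy {X : Type*} [Fintype X] (α : ℝ) (P : X → ℝ) : ℝ :=
  (1 - α)⁻¹ * Real.logb 2 (∑ x, P x ^ α)

/-- Relative `α`-entropy `Δ_α(P‖Q)` (base-2 logarithm). -/
noncomputable def relAlphaEntropy {X : Type*} [Fintype X] (α : ℝ) (P Q : X → ℝ) : ℝ :=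
  (α / (1 - α)) * Real.logb 2 (∑ x, P x * Q x ^ (α - 1))
    + Real.logb 2 (∑ x, Q x ^ α)
    - (1 - α)⁻¹ * Real.logb 2 (∑ x, P x ^ α)

/-- The list size of `x` under encoder `f`. -/
noncomputable def listSize {X : Type*} [Fintype X] {M : ℕ} (f : X → Fin M) (x : X) : ℕ :=
  (Finset.univ.filter (fun x' => f x' = f x)).card

lemma listSize_pos {X : Type*} [Fintype X] {M : ℕ} (f : X → Fin M) (x : X) :
    0 < listSize f x :=
  Finset.card_pos.2 ⟨x, by simp⟩

/-- The reciprocals of the list sizes sum to the number of labels used. -/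
lemma sum_inv_listSize {X : Type*} [Fintype X] {M : ℕ} (f : X → Fin M) :
    ∑ x, (listSize f x : ℝ)⁻¹ = ((Finset.univ.image f).card : ℝ) := by
  rw [← Finset.sum_fiberwise_of_maps_to (s := Finset.univ) (t := Finset.univ.image f) (g := f)
    (fun x _ => Finset.mem_image_of_mem f (Finset.mem_univ x)), Finset.card_eq_sum_ones,
    Nat.cast_sum]
  refine Finset.sum_congr rfl fun m hm => ?_
  obtain ⟨y, -, rfl⟩ := Finset.mem_image.1 hm
  have hconst : ∀ x ∈ Finset.univ.filter (fun x => f x = f y),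
      (listSize f x : ℝ)⁻¹ = (listSize f y : ℝ)⁻¹ := by
    intro x hx
    simp only [listSize, (Finset.mem_filter.1 hx).2]
  rw [Finset.sum_congr rfl hconst, Finset.sum_const, nsmul_eq_mul, Nat.cast_one]
  exact mul_inv_cancel₀ (Nat.cast_ne_zero.2 (listSize_pos f y).ne')

/-- Lemma 1: with `Q(x) = L(x)^{-(1+ρ)} / Σ_{x'} L(x')^{-(1+ρ)}` and
`M'` the number of labels actually used,
`E[L(X)^ρ] = 2^{ρ·[H_{ρ̃}(P) + Δ_{ρ̃}(P‖Q) − log₂ M']}` where `ρ̃ = 1/(1+ρ)`. -/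
theorem rho_moment_listSize_eq
    {X : Type*} [Fintype X] {M : ℕ} (hM : 0 < M) (f : X → Fin M)
    (P : X → ℝ) (hP : IsPMF P) (ρ : ℝ) (hρ : 0 < ρ)
    (Q : X → ℝ)
    (hQ : ∀ x, Q x = (listSize f x : ℝ) ^ (-(1 + ρ)) /
      ∑ x', (listSize f x' : ℝ) ^ (-(1 + ρ))) :
    ∑ x, P x * (listSize f x : ℝ) ^ ρ =
      (2 : ℝ) ^ (ρ * (renyiEntropy (1 / (1 + ρ)) P + relAlphaEntropy (1 / (1 + ρ)) P Q
        - Real.logb 2 ((Finset.univ.image f).card : ℝ))) := by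
  obtain ⟨hP0, hP1⟩ := hP
  have hX : Nonempty X := by
    by_contra h
    rw [not_nonempty_iff] at h
    simp at hP1
  have hL : ∀ x, (0 : ℝ) < listSize f x := fun x => Nat.cast_pos.2 (listSize_pos f x)
  set S := ∑ x', (listSize f x' : ℝ) ^ (-(1 + ρ)) with hS
  have hSpos : 0 < S :=
    Finset.sum_pos (fun x _ => rpow_pos_of_pos (hL x) _) Finset.univ_nonempty
  set E := ∑ x, P x * (listSize f x : ℝ) ^ ρ with hE
  have hEpos : 0 < E := by
    refine lt_of_lt_of_le one_pos (hP1 ▸ Finset.sum_le_sum fun x _ => ?_)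
    exact le_mul_of_one_le_right (hP0 x)
      (one_le_rpow (Nat.one_le_cast.2 (listSize_pos f x)) hρ.le)
  have hcross : ∑ x, P x * Q x ^ (1 / (1 + ρ) - 1) = E * S ^ (ρ / (1 + ρ)) := by
    rw [hE, Finset.sum_mul]
    refine Finset.sum_congr rfl fun x _ => ?_
    rw [hQ, div_rpow (rpow_pos_of_pos (hL x) _).le hSpos.le, ← rpow_mul (hL x).le,
      show -(1 + ρ) * (1 / (1 + ρ) - 1) = ρ by field_simp; ring,
      show 1 / (1 + ρ) - 1 = -(ρ / (1 + ρ)) by field_simp; ring, rpow_neg hSpos.le, div_inv_eq_mul,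
      mul_assoc]
  have hnorm : ∑ x, Q x ^ (1 / (1 + ρ)) =
      ((Finset.univ.image f).card : ℝ) * S ^ (-(1 / (1 + ρ))) := by
    rw [← sum_inv_listSize, Finset.sum_mul]
    refine Finset.sum_congr rfl fun x _ => ?_
    rw [hQ, div_rpow (rpow_pos_of_pos (hL x) _).le hSpos.le, ← rpow_mul (hL x).le,
      show -(1 + ρ) * (1 / (1 + ρ)) = -1 by field_simp, rpow_neg_one, rpow_neg hSpos.le,
      div_eq_mul_inv]
  have hM' : ((Finset.univ.image f).card : ℝ) ≠ 0 :=
    Nat.cast_ne_zero.2 (Finset.univ_nonempty.image f).card_pos.ne'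
  have hexp : ρ * (renyiEntropy (1 / (1 + ρ)) P + relAlphaEntropy (1 / (1 + ρ)) P Q
        - Real.logb 2 ((Finset.univ.image f).card : ℝ)) = Real.logb 2 E := by
    rw [renyiEntropy, relAlphaEntropy, hcross, hnorm,
      logb_mul hEpos.ne' (rpow_pos_of_pos hSpos _).ne',
      logb_mul hM' (rpow_pos_of_pos hSpos _).ne', logb_rpow_eq_mul_logb_of_pos hSpos,
      logb_rpow_eq_mul_logb_of_pos hSpos,
      show 1 / (1 + ρ) / (1 - 1 / (1 + ρ)) = 1 / ρ by
        rw [show 1 - 1 / (1 + ρ) = ρ / (1 + ρ) by field_simp; ring]; field_simp]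
    field_simp
    ring
  rw [hexp, rpow_logb two_pos (by norm_num) hEpos]
end

section
/- (Achievability of the distributed task-encoding theorem, IID case.) Fix ρ > 0 and set ρ̃ = 1/(1+ρ). Let P_{XY} be a joint PMF on the finite set X × Y, and let {(X_i,Y_i)}_{i=1}^∞ be IID with distribution P_{XY}. Suppose R_X > H_{ρ̃}(P_X), R_Y > H_{ρ̃}(P_Y), and R_X + R_Y > H_{ρ̃}(P_{XY}) + K_{ρ̃}(X;Y). Then there exists a sequence of pairs of functions f_n : X^n → {1,…,⌊2^{n·R_X}⌋}, g_n : Y^n → {1,…,⌊2^{n·R_Y}⌋} such that E[L(X^n,Y^n)^ρ] → 1 as n → ∞, where L(x^n,y^n) = |{(x',y') ∈ X^n × Y^n : f_n(x') = f_n(x^n) ∧ g_n(y') = g_n(y^n)}|. -/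
open Filter

/-- The dependence measure `K_α(X;Y)`: the minimum of `Δ_α(P_{XY}‖Q_X Q_Y)` over all PMFs
`Q_X` and `Q_Y`.  (Restricting to everywhere-positive `Q_X`, `Q_Y` gives the same value,
since by the convention `p/0 = ∞` any `Q` vanishing on the support of `P` yields an
infinite relative entropy, and `Δ_α` is continuous in positive `Q`.) -/
noncomputable def Kdep {X Y : Type*} [Fintype X] [Fintype Y] (α : ℝ) (P : X × Y → ℝ) : ℝ :=
  sInf {r : ℝ | ∃ QX : X → ℝ, ∃ QY : Y → ℝ, IsPMF QX ∧ IsPMF QY ∧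
    (∀ x, 0 < QX x) ∧ (∀ y, 0 < QY y) ∧
    r = relAlphaEntropy α P (fun p => QX p.1 * QY p.2)}

/-- The joint list size of `(xs,ys)` under the encoders `f` and `g`. -/
noncomputable def jointListSize {X Y : Type*} [Fintype X] [Fintype Y] {MX MY : ℕ}
    (f : X → Fin MX) (g : Y → Fin MY) (x : X) (y : Y) : ℕ :=
  (Finset.univ.filter (fun p : X × Y => f p.1 = f x ∧ g p.2 = g y)).card


lemma jointListSize_eq_mul {X Y : Type*} [Fintype X] [Fintype Y] {MX MY : ℕ}
    (f : X → Fin MX) (g : Y → Fin MY) (x : X) (y : Y) :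
    jointListSize f g x y =
      (Finset.univ.filter fun x' => f x' = f x).card *
        (Finset.univ.filter fun y' => g y' = g y).card := by
  rw [jointListSize, ← Finset.card_product]
  congr 1
  ext p
  simp

/-- A finite type can be coded with few labels so that each element `x` shares its label with at
most `l x` elements. -/
lemma exists_encoder_card_fiber_le {S : Type*} [Fintype S] (l : S → ℕ) (hl : ∀ x, 1 ≤ l x)
    (K M : ℕ) (hK : ∀ x, l x < 2 ^ K) (hM : 2 * ∑ x, (1 / l x : ℝ) + K ≤ M) :
    ∃ f : S → Fin M, ∀ x, (Finset.univ.filter fun x' => f x' = f x).card ≤ l x := by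
  classical
  let T : ℕ → Finset S := fun k => Finset.univ.filter fun x => Nat.log 2 (l x) = k
  have hT : ∀ x, x ∈ T (Nat.log 2 (l x)) := fun x => by simp [T]
  let idx : S → ℕ := fun x => ((T (Nat.log 2 (l x))).equivFin ⟨x, hT x⟩).val
  have hidx_lt : ∀ x, idx x < (T (Nat.log 2 (l x))).card := fun x => Fin.is_lt _
  have hidx_inj : ∀ x x', Nat.log 2 (l x) = Nat.log 2 (l x') → idx x = idx x' → x = x' := by
    have key : ∀ k x x' (h : x ∈ T k) (h' : x' ∈ T k),
        ((T k).equivFin ⟨x, h⟩).val = ((T k).equivFin ⟨x', h'⟩).val → x = x' := by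
      intro k x x' h h' e
      simpa using (T k).equivFin.injective (Fin.ext e)
    intro x x' hk e
    have hx' : x' ∈ T (Nat.log 2 (l x)) := by rw [hk]; exact hT x'
    refine key _ x x' (hT x) hx' (e.trans ?_)
    simp only [idx]
    congr! 3 <;> rw [hk]
  let C : Finset (Σ _ : ℕ, ℕ) :=
    (Finset.range K).sigma fun k => Finset.range ((T k).card / 2 ^ k + 1)
  let h : S → (Σ _ : ℕ, ℕ) := fun x => ⟨Nat.log 2 (l x), idx x / 2 ^ Nat.log 2 (l x)⟩
  have hmem : ∀ x, h x ∈ C := by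
    intro x
    simp only [C, h, Finset.mem_sigma, Finset.mem_range]
    refine ⟨Nat.log_lt_of_lt_pow (by have := hl x; omega) (hK x), ?_⟩
    exact Nat.lt_succ_of_le (Nat.div_le_div_right (hidx_lt x).le)
  have hclass : ∀ k, (((T k).card / 2 ^ k : ℕ) : ℝ) ≤ ∑ x ∈ T k, 2 * (1 / l x : ℝ) := by
    intro k
    refine Nat.cast_div_le.trans ?_
    rw [div_eq_mul_inv, ← nsmul_eq_mul, ← Finset.sum_const]
    refine Finset.sum_le_sum fun x hx => ?_
    have hxk : Nat.log 2 (l x) = k := by simpa [T] using hx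
    have h1 : l x < 2 ^ (k + 1) := hxk ▸ Nat.lt_pow_succ_log_self (by norm_num) _
    have h2 : (l x : ℝ) ≤ 2 ^ k * 2 := by
      rw [← pow_succ]; exact_mod_cast h1.le
    have h3 : (0 : ℝ) < l x := by exact_mod_cast hl x
    push_cast
    rw [mul_one_div, inv_eq_one_div, div_le_div_iff₀ (by positivity) h3]
    linarith
  have hcard : C.card ≤ M := by
    have hsum : ∑ k ∈ Finset.range K, ∑ x ∈ T k, 2 * (1 / l x : ℝ)
        = 2 * ∑ x, (1 / l x : ℝ) := by
      rw [Finset.mul_sum]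
      refine Finset.sum_fiberwise_of_maps_to (fun x _ => ?_) _
      have := hmem x
      simp only [C, h, Finset.mem_sigma] at this
      exact this.1
    have : (C.card : ℝ) ≤ M := by
      refine le_trans ?_ hM
      rw [← hsum, Finset.card_sigma]
      simp only [Finset.card_range, Finset.sum_add_distrib, Finset.sum_const, smul_eq_mul,
        mul_one, Nat.cast_add, Nat.cast_sum]
      gcongr with k
      exact hclass k
    exact_mod_cast this
  obtain ⟨e⟩ : Nonempty (C ↪ Fin M) := by
    rw [Function.Embedding.nonempty_iff_card_le]
    simpa using hcard
  refine ⟨fun x => e ⟨h x, hmem x⟩, fun x => ?_⟩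
  set k := Nat.log 2 (l x) with hk
  have hsub : ∀ x' ∈ Finset.univ.filter fun x' => e ⟨h x', hmem x'⟩ = e ⟨h x, hmem x⟩,
      Nat.log 2 (l x') = k ∧ idx x' / 2 ^ k = idx x / 2 ^ k := by
    intro x' hx'
    simp only [Finset.mem_filter, Finset.mem_univ, true_and, EmbeddingLike.apply_eq_iff_eq,
      Subtype.mk.injEq, h, Sigma.mk.injEq, heq_eq_eq] at hx'
    refine ⟨hx'.1, ?_⟩
    have := hx'.2
    rwa [hx'.1] at this
  calc _ ≤ (Finset.Ico (idx x / 2 ^ k * 2 ^ k) (idx x / 2 ^ k * 2 ^ k + 2 ^ k)).card := by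
        refine Finset.card_le_card_of_injOn idx (fun x' hx' => ?_) (fun a ha b hb hab => ?_)
        · have := (hsub x' hx').2
          rw [Finset.coe_Ico, Set.mem_Ico, ← this]
          have h1 := Nat.div_add_mod (idx x') (2 ^ k)
          have h2 := Nat.mod_lt (idx x') (show 2 ^ k > 0 by positivity)
          rw [mul_comm (2 ^ k)] at h1
          omega
        · exact hidx_inj a b ((hsub a ha).1.trans (hsub b hb).1.symm) hab
    _ = 2 ^ k := by simp
    _ ≤ l x := Nat.pow_log_le_self 2 (by have := hl x; omega)

lemma natCeil_rpow_le {ρ a : ℝ} (hρ : 0 < ρ) (ha : 0 < a) :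
    (⌈a⌉₊ : ℝ) ^ ρ ≤ 1 + 2 ^ ρ * a ^ ρ := by
  rcases le_or_gt a 1 with h | h
  · have : ⌈a⌉₊ = 1 := by
      apply le_antisymm (by simpa using h) (Nat.ceil_pos.2 ha)
    rw [this, Nat.cast_one, Real.one_rpow]
    have : 0 ≤ 2 ^ ρ * a ^ ρ := by positivity
    linarith
  · have h1 : (⌈a⌉₊ : ℝ) ≤ 2 * a := by
      have := (Nat.ceil_lt_add_one ha.le).le
      linarith
    calc (⌈a⌉₊ : ℝ) ^ ρ ≤ (2 * a) ^ ρ := by gcongr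
      _ = 2 ^ ρ * a ^ ρ := Real.mul_rpow (by norm_num) ha.le
      _ ≤ _ := by linarith

lemma eventually_rate_le {r R : ℝ} (hR : 0 < R) (hr : r < R) (m : ℕ) :
    ∀ᶠ n : ℕ in atTop,
      4 * (2 : ℝ) ^ ((n : ℝ) * r) + ((n * m + 1 : ℕ) : ℝ) ≤ ⌊(2 : ℝ) ^ ((n : ℝ) * R)⌋₊ := by
  have hpow : ∀ (s : ℝ) (n : ℕ), (2 : ℝ) ^ ((n : ℝ) * s) = ((2 : ℝ) ^ s) ^ n := fun s n => by
    rw [mul_comm, Real.rpow_mul (by norm_num), Real.rpow_natCast]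
  have hB : (1 : ℝ) < 2 ^ R := Real.one_lt_rpow (by norm_num) hR
  have h1 : Tendsto (fun n : ℕ => ((2 : ℝ) ^ r / 2 ^ R) ^ n) atTop (nhds 0) := by
    refine tendsto_pow_atTop_nhds_zero_of_lt_one (by positivity) ?_
    rw [div_lt_one (by positivity)]
    exact Real.rpow_lt_rpow_of_exponent_lt (by norm_num) hr
  have h2 : Tendsto (fun n : ℕ => (n : ℝ) / ((2 : ℝ) ^ R) ^ n) atTop (nhds 0) := by
    simpa using tendsto_pow_const_div_const_pow_of_one_lt 1 hB
  have h3 : Tendsto (fun n : ℕ => (2 : ℝ) / ((2 : ℝ) ^ R) ^ n) atTop (nhds 0) :=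
    tendsto_const_nhds.div_atTop (tendsto_pow_atTop_atTop_of_one_lt hB)
  have h4 := ((h1.const_mul 4).add (h2.const_mul (m : ℝ))).add h3
  simp only [mul_zero, add_zero] at h4
  filter_upwards [h4.eventually_lt_const one_pos] with n hn
  have hpos : (0 : ℝ) < ((2 : ℝ) ^ R) ^ n := by positivity
  have h5 : 4 * ((2 : ℝ) ^ r) ^ n + m * n + 2 < ((2 : ℝ) ^ R) ^ n := by
    have := mul_lt_mul_of_pos_right hn hpos
    rw [div_pow] at this
    field_simp at this
    linarith
  rw [hpow, hpow]
  have := Nat.lt_floor_add_one (((2 : ℝ) ^ R) ^ n)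
  push_cast
  linarith

/-- For large `n`, a code of rate `R > r` exists whose cell sizes are controlled by
`2 ^ (-n r)` divided by the sum of two product weights. -/
lemma eventually_exists_encoder {X : Type*} [Fintype X] {U V : X → ℝ} {r R : ℝ}
    (hU : ∀ x, 0 < U x) (hU1 : ∑ x, U x = 1) (hV : ∀ x, 0 ≤ V x) (hV1 : ∑ x, V x = 1)
    (hr0 : 0 < r) (hr : r < R) :
    ∀ᶠ n : ℕ in atTop, ∃ f : (Fin n → X) → Fin ⌊(2 : ℝ) ^ ((n : ℝ) * R)⌋₊, ∀ x,
      (Finset.univ.filter fun x' => f x' = f x).card ≤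
        ⌈((2 : ℝ) ^ (-r)) ^ n / (∏ i, U (x i) + ∏ i, V (x i))⌉₊ := by
  obtain ⟨m, hm⟩ : ∃ m : ℕ, ∀ x, (U x)⁻¹ ≤ 2 ^ m := by
    obtain ⟨B, hB⟩ := Finite.exists_le fun x => (U x)⁻¹
    obtain ⟨m, hm⟩ := pow_unbounded_of_one_lt B (one_lt_two (α := ℝ))
    exact ⟨m, fun x => (hB x).trans hm.le⟩
  filter_upwards [eventually_rate_le (hr0.trans hr) hr m] with n hn
  have hUpos : ∀ x : Fin n → X, 0 < ∏ i, U (x i) := fun x => Finset.prod_pos fun i _ => hU _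
  have hVnn : ∀ x : Fin n → X, 0 ≤ ∏ i, V (x i) := fun x => Finset.prod_nonneg fun i _ => hV _
  have hw : ∀ x : Fin n → X, 0 < ∏ i, U (x i) + ∏ i, V (x i) := fun x =>
    add_pos_of_pos_of_nonneg (hUpos x) (hVnn x)
  have hc : 0 < ((2 : ℝ) ^ (-r)) ^ n := by positivity
  have hc1 : ((2 : ℝ) ^ (-r)) ^ n ≤ 1 :=
    pow_le_one₀ (by positivity) (Real.rpow_le_one_of_one_le_of_nonpos (by norm_num) (by linarith))
  refine exists_encoder_card_fiber_le _ (fun x => Nat.ceil_pos.2 (div_pos hc (hw x)))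
    (n * m + 1) _ (fun x => ?_) (le_trans ?_ hn)
  · refine lt_of_le_of_lt (b := 2 ^ (n * m)) (Nat.ceil_le.2 ?_)
      (Nat.pow_lt_pow_right (by norm_num) (Nat.lt_succ_self _))
    calc ((2 : ℝ) ^ (-r)) ^ n / (∏ i, U (x i) + ∏ i, V (x i)) ≤ 1 / ∏ i, U (x i) := by
          gcongr
          · exact hUpos x
          · linarith [hVnn x]
      _ = ∏ i, (U (x i))⁻¹ := by rw [one_div, Finset.prod_inv_distrib]
      _ ≤ ∏ _i : Fin n, (2 : ℝ) ^ m :=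
          Finset.prod_le_prod (fun i _ => (inv_pos.2 (hU _)).le) fun i _ => hm _
      _ = _ := by simp [← pow_mul, mul_comm]
  · have hsum : ∑ x : Fin n → X, (∏ i, U (x i) + ∏ i, V (x i)) = 2 := by
      rw [Finset.sum_add_distrib, ← Fintype.sum_pow, ← Fintype.sum_pow, hU1, hV1]
      norm_num
    have hcinv : (2 : ℝ) ^ ((n : ℝ) * r) = (((2 : ℝ) ^ (-r)) ^ n)⁻¹ := by
      rw [mul_comm, Real.rpow_mul (by norm_num), Real.rpow_natCast, Real.rpow_neg (by norm_num),
        inv_pow, inv_inv]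
    have hle : ∑ x : Fin n → X,
        (1 / (⌈((2 : ℝ) ^ (-r)) ^ n / (∏ i, U (x i) + ∏ i, V (x i))⌉₊ : ℝ))
        ≤ 2 * (2 : ℝ) ^ ((n : ℝ) * r) := by
      rw [hcinv]
      refine (Finset.sum_le_sum fun x _ => ?_).trans_eq
        ((Finset.sum_mul _ _ _).symm.trans (congrArg (· * _) hsum))
      calc _ ≤ 1 / (((2 : ℝ) ^ (-r)) ^ n / (∏ i, U (x i) + ∏ i, V (x i))) :=
            one_div_le_one_div_of_le (div_pos hc (hw x)) (Nat.le_ceil _)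
        _ = _ := by rw [one_div_div, div_eq_mul_inv]
    linarith

lemma IsPMF.le_one {X : Type*} [Fintype X] {P : X → ℝ} (hP : IsPMF P) (x : X) : P x ≤ 1 := by
  rw [← hP.2]
  exact Finset.single_le_sum (fun i _ => hP.1 i) (Finset.mem_univ x)

lemma IsPMF.one_le_sum_rpow {X : Type*} [Fintype X] {P : X → ℝ} (hP : IsPMF P) {α : ℝ}
    (hα0 : 0 < α) (hα : α ≤ 1) : 1 ≤ ∑ x, P x ^ α := by
  rw [← hP.2]
  refine Finset.sum_le_sum fun x _ => ?_
  rcases (hP.1 x).eq_or_lt with h | h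
  · rw [← h, Real.zero_rpow hα0.ne']
  · simpa using Real.rpow_le_rpow_of_exponent_ge h (hP.le_one x) hα

lemma IsPMF.renyiEntropy_nonneg {X : Type*} [Fintype X] {P : X → ℝ} (hP : IsPMF P) {α : ℝ}
    (hα0 : 0 < α) (hα : α ≤ 1) : 0 ≤ renyiEntropy α P :=
  mul_nonneg (inv_nonneg.2 (by linarith))
    (Real.logb_nonneg (by norm_num) (hP.one_le_sum_rpow hα0 hα))

/-- The tilted distribution, proportional to `Q ^ α`. -/
noncomputable def tilt {X : Type*} [Fintype X] (α : ℝ) (Q : X → ℝ) (x : X) : ℝ :=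
  Q x ^ α / ∑ x, Q x ^ α

lemma IsPMF.sum_rpow_pos {X : Type*} [Fintype X] {Q : X → ℝ} (hQ : IsPMF Q) {α : ℝ}
    (hα0 : 0 < α) (hα : α ≤ 1) : 0 < ∑ x, Q x ^ α :=
  one_pos.trans_le (hQ.one_le_sum_rpow hα0 hα)

lemma IsPMF.tilt_pos {X : Type*} [Fintype X] {Q : X → ℝ} (hQ : IsPMF Q) {α : ℝ}
    (hα0 : 0 < α) (hα : α ≤ 1) {x : X} (hx : 0 < Q x) : 0 < tilt α Q x :=
  div_pos (Real.rpow_pos_of_pos hx _) (hQ.sum_rpow_pos hα0 hα)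

lemma IsPMF.tilt_isPMF {X : Type*} [Fintype X] {Q : X → ℝ} (hQ : IsPMF Q) {α : ℝ}
    (hα0 : 0 < α) (hα : α ≤ 1) : IsPMF (tilt α Q) := by
  refine ⟨fun x => div_nonneg (Real.rpow_nonneg (hQ.1 x) _) (hQ.sum_rpow_pos hα0 hα).le, ?_⟩
  simp only [tilt, ← Finset.sum_div]
  exact div_self (hQ.sum_rpow_pos hα0 hα).ne'

lemma two_rpow_div_rpow {ρ r q S α : ℝ} (hq : 0 < q) (hS : 0 < S) :
    ((2 : ℝ) ^ (-r) / (q ^ α / S)) ^ ρ = 2 ^ (-(ρ * r)) * S ^ ρ * q ^ (-(ρ * α)) := by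
  have h1 : (2 : ℝ) ^ (-r) / (q ^ α / S) = 2 ^ (-r) * S * q ^ (-α) := by
    rw [Real.rpow_neg hq.le, div_div_eq_mul_div, div_eq_mul_inv]
  rw [h1, Real.mul_rpow (by positivity) (by positivity), Real.mul_rpow (by positivity) hS.le,
    ← Real.rpow_mul (by norm_num), ← Real.rpow_mul hq.le]
  ring_nf

lemma two_rpow_neg_mul_lt_one {A s : ℝ} (hA : 0 < A) (h : Real.logb 2 A < s) :
    (2 : ℝ) ^ (-s) * A < 1 := by
  rw [Real.logb_lt_iff_lt_rpow (by norm_num) hA] at h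
  rw [Real.rpow_neg (by norm_num), inv_mul_lt_iff₀ (by positivity)]
  linarith

lemma sum_tilt_lt_one {X : Type*} [Fintype X] {P : X → ℝ} (hP : IsPMF P) {ρ r : ℝ} (hρ : 0 < ρ)
    (hr : renyiEntropy (1 / (1 + ρ)) P < r) :
    ∑ x, P x * ((2 : ℝ) ^ (-r) / tilt (1 / (1 + ρ)) P x) ^ ρ < 1 := by
  have hα0 : 0 < 1 / (1 + ρ) := by positivity
  have hα1 : 1 / (1 + ρ) ≤ 1 := by rw [div_le_one (by positivity)]; linarith
  have hα : 1 + -(ρ * (1 / (1 + ρ))) = 1 / (1 + ρ) := by field_simp; ring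
  have hH : (1 - 1 / (1 + ρ))⁻¹ = (1 + ρ) / ρ := by field_simp; simp [hρ.ne']
  rw [renyiEntropy, hH] at hr
  have hS := hP.sum_rpow_pos hα0 hα1
  simp only [tilt]
  generalize 1 / (1 + ρ) = α at *
  set S := ∑ x, P x ^ α with hSdef
  have hterm : ∀ x, P x * ((2 : ℝ) ^ (-r) / (P x ^ α / S)) ^ ρ
      = 2 ^ (-(ρ * r)) * S ^ ρ * P x ^ α := by
    intro x
    rcases (hP.1 x).eq_or_lt with h | h
    · rw [← h, Real.zero_rpow hα0.ne']; simp
    · have h1 : P x * P x ^ (-(ρ * α)) = P x ^ α := by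
        rw [← hα, Real.rpow_add h, Real.rpow_one, hα]
      rw [two_rpow_div_rpow h hS, ← h1]
      ring
  rw [Finset.sum_congr rfl fun x _ => hterm x, ← Finset.mul_sum, ← hSdef, mul_assoc]
  have hSS : S ^ ρ * S = S ^ (1 + ρ) := by
    rw [Real.rpow_add hS, Real.rpow_one, mul_comm]
  rw [hSS]
  refine two_rpow_neg_mul_lt_one (by positivity) ?_
  rw [Real.logb_rpow_eq_mul_logb_of_pos hS]
  rw [div_mul_eq_mul_div, div_lt_iff₀ hρ] at hr
  linarith

lemma sum_tilt_prod_lt_one {X Y : Type*} [Fintype X] [Fintype Y] {P : X × Y → ℝ} (hP : IsPMF P)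
    {QX : X → ℝ} {QY : Y → ℝ} (hQX : IsPMF QX) (hQY : IsPMF QY) (hX : ∀ x, 0 < QX x)
    (hY : ∀ y, 0 < QY y) {ρ r s : ℝ} (hρ : 0 < ρ)
    (hrs : renyiEntropy (1 / (1 + ρ)) P
      + relAlphaEntropy (1 / (1 + ρ)) P (fun p => QX p.1 * QY p.2) < r + s) :
    ∑ p : X × Y, P p * (((2 : ℝ) ^ (-r) / tilt (1 / (1 + ρ)) QX p.1) ^ ρ
      * ((2 : ℝ) ^ (-s) / tilt (1 / (1 + ρ)) QY p.2) ^ ρ) < 1 := by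
  have hα0 : 0 < 1 / (1 + ρ) := by positivity
  have hα1 : 1 / (1 + ρ) ≤ 1 := by rw [div_le_one (by positivity)]; linarith
  have hα : 1 / (1 + ρ) - 1 = -(ρ * (1 / (1 + ρ))) := by field_simp; ring
  have hH : 1 / (1 + ρ) / (1 - 1 / (1 + ρ)) = 1 / ρ := by field_simp; simp [hρ.ne']
  rw [renyiEntropy, relAlphaEntropy, hH] at hrs
  have hSX := hQX.sum_rpow_pos hα0 hα1
  have hSY := hQY.sum_rpow_pos hα0 hα1
  simp only [tilt]
  generalize 1 / (1 + ρ) = α at *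
  have hSXY : ∑ p : X × Y, (QX p.1 * QY p.2) ^ α = (∑ x, QX x ^ α) * ∑ y, QY y ^ α := by
    rw [Finset.sum_mul_sum, Fintype.sum_prod_type]
    exact Finset.sum_congr rfl fun x _ => Finset.sum_congr rfl fun y _ =>
      Real.mul_rpow (hX x).le (hY y).le
  rw [hSXY] at hrs
  set SX := ∑ x, QX x ^ α
  set SY := ∑ y, QY y ^ α
  set A := ∑ p : X × Y, P p * (QX p.1 * QY p.2) ^ (α - 1) with hAdef
  have hA : 0 < A := by
    obtain ⟨p, -, hp⟩ : ∃ p ∈ Finset.univ, 0 < P p := by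
      by_contra! h
      have := Finset.sum_nonpos h
      rw [hP.2] at this
      linarith
    have hnn : ∀ p : X × Y, 0 < (QX p.1 * QY p.2) ^ (α - 1) := fun p =>
      Real.rpow_pos_of_pos (mul_pos (hX _) (hY _)) _
    exact Finset.sum_pos' (fun p _ => mul_nonneg (hP.1 p) (hnn p).le)
      ⟨p, Finset.mem_univ p, mul_pos hp (hnn p)⟩
  have hterm : ∀ p : X × Y, P p * (((2 : ℝ) ^ (-r) / (QX p.1 ^ α / SX)) ^ ρ
      * ((2 : ℝ) ^ (-s) / (QY p.2 ^ α / SY)) ^ ρ)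
      = 2 ^ (-(ρ * (r + s))) * (SX * SY) ^ ρ * (P p * (QX p.1 * QY p.2) ^ (α - 1)) := by
    intro p
    rw [two_rpow_div_rpow (hX _) hSX, two_rpow_div_rpow (hY _) hSY, hα,
      Real.mul_rpow (hX _).le (hY _).le, Real.mul_rpow hSX.le hSY.le,
      show -(ρ * (r + s)) = -(ρ * r) + -(ρ * s) by ring, Real.rpow_add (by norm_num)]
    ring
  rw [Finset.sum_congr rfl fun p _ => hterm p, ← Finset.mul_sum, ← hAdef, mul_assoc]
  refine two_rpow_neg_mul_lt_one (by positivity) ?_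
  rw [Real.logb_mul (by positivity) hA.ne', Real.logb_rpow_eq_mul_logb_of_pos (by positivity)]
  have h := mul_lt_mul_of_pos_left hrs hρ
  have h2 : ρ * (1 / ρ * Real.logb 2 A) = Real.logb 2 A := by field_simp
  linarith

lemma sum_prod_pi {X Y : Type*} [Fintype X] [Fintype Y] (h : X × Y → ℝ) (n : ℕ) :
    ∑ p : (Fin n → X) × (Fin n → Y), ∏ i, h (p.1 i, p.2 i) = (∑ q, h q) ^ n := by
  rw [Fintype.sum_pow]
  exact (Fintype.sum_equiv (Equiv.arrowProdEquivProdArrow (Fin n) (fun _ => X) (fun _ => Y)) _ _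
    fun p => rfl).symm

lemma div_prod_rpow {X : Type*} {n : ℕ} {c ρ : ℝ} (hc : 0 ≤ c) {U : X → ℝ}
    (hU : ∀ x, 0 ≤ U x) (x : Fin n → X) :
    (c ^ n / ∏ i, U (x i)) ^ ρ = ∏ i, (c / U (x i)) ^ ρ := by
  rw [Real.finsetProd_rpow _ _ fun i _ => div_nonneg hc (hU _), Finset.prod_div_distrib]
  simp

/-- A cell bounded by the ceiling of `c ^ n` over a sum of two product weights has `ρ`-th moment
`1` plus a term controlled by each weight separately. -/
lemma card_rpow_le {X : Type*} {n k : ℕ} {c ρ : ℝ} (hc : 0 < c) (hρ : 0 < ρ) {U V : X → ℝ}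
    (hU : ∀ x, 0 < U x) (hV : ∀ x, 0 ≤ V x) {x : Fin n → X}
    (hk : k ≤ ⌈c ^ n / (∏ i, U (x i) + ∏ i, V (x i))⌉₊) :
    ∃ a : ℝ, 0 ≤ a ∧ (k : ℝ) ^ ρ ≤ 1 + 2 ^ ρ * a ∧ a ≤ ∏ i, (c / U (x i)) ^ ρ ∧
      ((∀ i, 0 < V (x i)) → a ≤ ∏ i, (c / V (x i)) ^ ρ) := by
  have hUpos : 0 < ∏ i, U (x i) := Finset.prod_pos fun i _ => hU _
  have hVnn : 0 ≤ ∏ i, V (x i) := Finset.prod_nonneg fun i _ => hV _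
  refine ⟨(c ^ n / (∏ i, U (x i) + ∏ i, V (x i))) ^ ρ, by positivity, ?_, ?_, fun h => ?_⟩
  · exact (Real.rpow_le_rpow (by positivity) (by exact_mod_cast hk) hρ.le).trans
      (natCeil_rpow_le hρ (by positivity))
  · rw [← div_prod_rpow hc.le fun x => (hU x).le]
    gcongr
    linarith
  · rw [← div_prod_rpow hc.le hV]
    have : 0 < ∏ i, V (x i) := Finset.prod_pos fun i _ => h i
    gcongr
    linarith

lemma isPMF_uniform (X : Type*) [Fintype X] [Nonempty X] :
    IsPMF fun _ : X => (Fintype.card X : ℝ)⁻¹ :=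
  ⟨fun _ => by positivity, by simp⟩

lemma tendsto_pow_zero_of_sum_lt_one {Z : Type*} [Fintype Z] {h : Z → ℝ} (h0 : ∀ z, 0 ≤ h z)
    (h1 : ∑ z, h z < 1) : Tendsto (fun n : ℕ => (∑ z, h z) ^ n) atTop (nhds 0) :=
  tendsto_pow_atTop_nhds_zero_of_lt_one (Finset.sum_nonneg fun z _ => h0 z) h1

/-- Sequential choice for a property that holds eventually. -/
lemma Filter.Eventually.exists_seq {α : ℕ → Type*} [∀ n, Nonempty (α n)]
    {p : ∀ n, α n → Prop} (h : ∀ᶠ n in atTop, ∃ a, p n a) :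
    ∃ F : ∀ n, α n, ∀ᶠ n in atTop, p n (F n) := by
  classical
  refine ⟨fun n => if hn : ∃ a, p n a then hn.choose else Classical.arbitrary _, ?_⟩
  filter_upwards [h] with n hn
  simpa only [dif_pos hn] using hn.choose_spec

/-- achievability, IID case: if `R_X > H_{ρ̃}(P_X)`, `R_Y > H_{ρ̃}(P_Y)` and
`R_X + R_Y > H_{ρ̃}(P_{XY}) + K_{ρ̃}(X;Y)` with `ρ̃ = 1/(1+ρ)`, then there exist encoders
`f_n : X^n → {1,…,⌊2^{nR_X}⌋}` and `g_n : Y^n → {1,…,⌊2^{nR_Y}⌋}` whose `ρ`-th moment of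
the joint list size (under the `n`-fold product of `P_{XY}`) tends to `1`. -/
theorem distributed_task_encoding_achievability_iid
    {X Y : Type*} [Fintype X] [Fintype Y]
    (ρ : ℝ) (hρ : 0 < ρ) (P : X × Y → ℝ) (hP : IsPMF P)
    (RX RY : ℝ)
    (hRX : RX > renyiEntropy (1 / (1 + ρ)) (fun x => ∑ y, P (x, y)))
    (hRY : RY > renyiEntropy (1 / (1 + ρ)) (fun y => ∑ x, P (x, y)))
    (hsum : RX + RY > renyiEntropy (1 / (1 + ρ)) P + Kdep (1 / (1 + ρ)) P) :
    ∃ (F : ∀ n : ℕ, (Fin n → X) → Fin ⌊(2 : ℝ) ^ ((n : ℝ) * RX)⌋₊)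
      (G : ∀ n : ℕ, (Fin n → Y) → Fin ⌊(2 : ℝ) ^ ((n : ℝ) * RY)⌋₊),
      Filter.Tendsto
        (fun n : ℕ => ∑ p : (Fin n → X) × (Fin n → Y),
          (∏ i, P (p.1 i, p.2 i)) * (jointListSize (F n) (G n) p.1 p.2 : ℝ) ^ ρ)
        Filter.atTop (nhds 1) := by

  have hα0 : 0 < 1 / (1 + ρ) := by positivity
  have hα1 : 1 / (1 + ρ) ≤ 1 := by rw [div_le_one (by positivity)]; linarith
  have hPX : IsPMF fun x => ∑ y, P (x, y) :=
    ⟨fun x => Finset.sum_nonneg fun y _ => hP.1 _, by rw [← Fintype.sum_prod_type, hP.2]⟩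
  have hPY : IsPMF fun y => ∑ x, P (x, y) :=
    ⟨fun y => Finset.sum_nonneg fun x _ => hP.1 _, by rw [← Fintype.sum_prod_type_right, hP.2]⟩
  obtain ⟨q⟩ : Nonempty (X × Y) := by
    by_contra h
    have := not_nonempty_iff.1 h
    simpa using hP.2
  have : Nonempty X := ⟨q.1⟩
  have : Nonempty Y := ⟨q.2⟩
  obtain ⟨_, ⟨QX, QY, hQX, hQY, hQX0, hQY0, rfl⟩, hD⟩ :=
    exists_lt_of_csInf_lt
      (⟨_, _, _, isPMF_uniform X, isPMF_uniform Y, fun _ => by positivity,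
        fun _ => by positivity, rfl⟩ : Set.Nonempty {r : ℝ | ∃ QX : X → ℝ, ∃ QY : Y → ℝ,
          IsPMF QX ∧ IsPMF QY ∧ (∀ x, 0 < QX x) ∧ (∀ y, 0 < QY y) ∧
          r = relAlphaEntropy (1 / (1 + ρ)) P (fun p => QX p.1 * QY p.2)})
      (show Kdep (1 / (1 + ρ)) P < RX + RY - renyiEntropy (1 / (1 + ρ)) P by linarith)
  set D := renyiEntropy (1 / (1 + ρ)) P
    + relAlphaEntropy (1 / (1 + ρ)) P (fun p => QX p.1 * QY p.2) with hDdef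
  obtain ⟨rX, hrX, hrXR⟩ := exists_between (max_lt hRX (show D - RY < RX by linarith))
  obtain ⟨hrX1, hrX2⟩ := max_lt_iff.1 hrX
  obtain ⟨rY, hrY, hrYR⟩ := exists_between (max_lt hRY (show D - rX < RY by linarith))
  obtain ⟨hrY1, hrY2⟩ := max_lt_iff.1 hrY
  have hrX0 : 0 < rX := (hPX.renyiEntropy_nonneg hα0 hα1).trans_lt hrX1
  have hrY0 : 0 < rY := (hPY.renyiEntropy_nonneg hα0 hα1).trans_lt hrY1
  have hne : ∀ {R : ℝ}, 0 < R → ∀ n : ℕ, Nonempty (Fin ⌊(2 : ℝ) ^ ((n : ℝ) * R)⌋₊) :=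
    fun hR n => Fin.pos_iff_nonempty.1 <| Nat.floor_pos.2 <|
      Real.one_le_rpow (by norm_num) (by positivity)
  have := hne (hrX0.trans hrXR)
  have := hne (hrY0.trans hrYR)
  obtain ⟨F, hF⟩ := Filter.Eventually.exists_seq
    (eventually_exists_encoder (fun x => hQX.tilt_pos hα0 hα1 (hQX0 x))
    (hQX.tilt_isPMF hα0 hα1).2 (hPX.tilt_isPMF hα0 hα1).1 (hPX.tilt_isPMF hα0 hα1).2 hrX0 hrXR)
  obtain ⟨G, hG⟩ := Filter.Eventually.exists_seq
    (eventually_exists_encoder (fun y => hQY.tilt_pos hα0 hα1 (hQY0 y))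
    (hQY.tilt_isPMF hα0 hα1).2 (hPY.tilt_isPMF hα0 hα1).1 (hPY.tilt_isPMF hα0 hα1).2 hrY0 hrYR)
  refine ⟨F, G, ?_⟩
  have hlimX := sum_tilt_lt_one hPX hρ hrX1
  have hlimY := sum_tilt_lt_one hPY hρ hrY1
  have hlimXY := sum_tilt_prod_lt_one hP hQX hQY hQX0 hQY0 hρ
    (show _ < rX + rY by rw [← hDdef]; linarith)
  have hUX0 := fun x => hQX.tilt_pos hα0 hα1 (hQX0 x)
  have hUY0 := fun y => hQY.tilt_pos hα0 hα1 (hQY0 y)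
  have hVX0 := (hPX.tilt_isPMF hα0 hα1).1
  have hVY0 := (hPY.tilt_isPMF hα0 hα1).1
  have hVXpos : ∀ p : X × Y, 0 < P p → 0 < tilt (1 / (1 + ρ)) (fun x => ∑ y, P (x, y)) p.1 :=
    fun p hp => hPX.tilt_pos hα0 hα1 <|
      Finset.sum_pos' (fun y _ => hP.1 _) ⟨p.2, Finset.mem_univ _, hp⟩
  have hVYpos : ∀ p : X × Y, 0 < P p → 0 < tilt (1 / (1 + ρ)) (fun y => ∑ x, P (x, y)) p.2 :=
    fun p hp => hPY.tilt_pos hα0 hα1 <|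
      Finset.sum_pos' (fun x _ => hP.1 _) ⟨p.1, Finset.mem_univ _, hp⟩
  set UX := tilt (1 / (1 + ρ)) QX
  set UY := tilt (1 / (1 + ρ)) QY
  set VX := tilt (1 / (1 + ρ)) fun x => ∑ y, P (x, y)
  set VY := tilt (1 / (1 + ρ)) fun y => ∑ x, P (x, y)
  have hcX : 0 < (2 : ℝ) ^ (-rX) := by positivity
  have hcY : 0 < (2 : ℝ) ^ (-rY) := by positivity
  set cX := (2 : ℝ) ^ (-rX)
  set cY := (2 : ℝ) ^ (-rY)
  have hfX : ∑ x, (∑ y, P (x, y)) * (cX / VX x) ^ ρ = ∑ p, P p * (cX / VX p.1) ^ ρ := by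
    simp only [Fintype.sum_prod_type, Finset.sum_mul]
  have hfY : ∑ y, (∑ x, P (x, y)) * (cY / VY y) ^ ρ = ∑ p, P p * (cY / VY p.2) ^ ρ := by
    simp only [Fintype.sum_prod_type_right, Finset.sum_mul]
  rw [hfX] at hlimX
  rw [hfY] at hlimY
  have hnX : ∀ p : X × Y, 0 ≤ P p * (cX / VX p.1) ^ ρ := fun p =>
    mul_nonneg (hP.1 p) (Real.rpow_nonneg (div_nonneg hcX.le (hVX0 _)) _)
  have hnY : ∀ p : X × Y, 0 ≤ P p * (cY / VY p.2) ^ ρ := fun p =>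
    mul_nonneg (hP.1 p) (Real.rpow_nonneg (div_nonneg hcY.le (hVY0 _)) _)
  have hnXY : ∀ p : X × Y, 0 ≤ P p * ((cX / UX p.1) ^ ρ * (cY / UY p.2) ^ ρ) := fun p =>
    mul_nonneg (hP.1 p) (mul_nonneg (Real.rpow_nonneg (div_nonneg hcX.le (hUX0 _).le) _)
      (Real.rpow_nonneg (div_nonneg hcY.le (hUY0 _).le) _))
  have hlim := ((tendsto_const_nhds (x := (1 : ℝ))).add
    ((((tendsto_pow_zero_of_sum_lt_one hnX hlimX).add
      (tendsto_pow_zero_of_sum_lt_one hnY hlimY))).const_mul ((2 : ℝ) ^ ρ))).add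
    ((tendsto_pow_zero_of_sum_lt_one hnXY hlimXY).const_mul ((2 : ℝ) ^ ρ * 2 ^ ρ))
  simp only [add_zero, mul_zero] at hlim
  have hmass : ∀ n : ℕ, ∑ p : (Fin n → X) × (Fin n → Y), ∏ i, P (p.1 i, p.2 i) = 1 := fun n => by
    rw [sum_prod_pi, hP.2, one_pow]
  have hPn : ∀ (n : ℕ) (p : (Fin n → X) × (Fin n → Y)), 0 ≤ ∏ i, P (p.1 i, p.2 i) :=
    fun n p => Finset.prod_nonneg fun i _ => hP.1 _
  refine tendsto_of_tendsto_of_tendsto_of_le_of_le' tendsto_const_nhds hlim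
    (Eventually.of_forall fun n => ?_) ?_
  · rw [← hmass n]
    refine Finset.sum_le_sum fun p _ => le_mul_of_one_le_right (hPn n p) ?_
    refine Real.one_le_rpow ?_ hρ.le
    have : 0 < jointListSize (F n) (G n) p.1 p.2 := Finset.card_pos.2 ⟨p, by simp⟩
    exact_mod_cast this
  · filter_upwards [hF, hG] with n hFn hGn
    rw [← hmass n, ← sum_prod_pi, ← sum_prod_pi, ← sum_prod_pi, ← Finset.sum_add_distrib,
      Finset.mul_sum, Finset.mul_sum, ← Finset.sum_add_distrib, ← Finset.sum_add_distrib]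
    refine Finset.sum_le_sum fun p _ => ?_
    simp only [Finset.prod_mul_distrib]
    rcases (hPn n p).eq_or_lt with h0 | h0
    · simp [← h0]
    have hPpos : ∀ i, 0 < P (p.1 i, p.2 i) := fun i =>
      (hP.1 _).lt_of_ne' (Finset.prod_ne_zero_iff.1 h0.ne' i (Finset.mem_univ i))
    obtain ⟨a, ha0, ha, haU, haV⟩ := card_rpow_le hcX hρ hUX0 hVX0 (hFn p.1)
    obtain ⟨b, hb0, hb, hbU, hbV⟩ := card_rpow_le hcY hρ hUY0 hVY0 (hGn p.2)
    have haV := haV fun i => hVXpos _ (hPpos i)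
    have hbV := hbV fun i => hVYpos _ (hPpos i)
    have hab := mul_le_mul haU hbU hb0 (ha0.trans haU)
    rw [jointListSize_eq_mul, Nat.cast_mul, Real.mul_rpow (by positivity) (by positivity)]
    have h2 : (0 : ℝ) < 2 ^ ρ := by positivity
    calc _ ≤ (∏ i, P (p.1 i, p.2 i)) * ((1 + 2 ^ ρ * a) * (1 + 2 ^ ρ * b)) := by gcongr
      _ = (∏ i, P (p.1 i, p.2 i)) * (1 + 2 ^ ρ * (a + b) + 2 ^ ρ * 2 ^ ρ * (a * b)) := by ring
      _ ≤ (∏ i, P (p.1 i, p.2 i)) *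
          (1 + 2 ^ ρ * (∏ i, (cX / VX (p.1 i)) ^ ρ + ∏ i, (cY / VY (p.2 i)) ^ ρ)
            + 2 ^ ρ * 2 ^ ρ * ((∏ i, (cX / UX (p.1 i)) ^ ρ) * ∏ i, (cY / UY (p.2 i)) ^ ρ)) := by
          gcongr
      _ = _ := by ring
end
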